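/- For a subset C of the 24 candidate pairs, let Γ_C be the simple graph on the 18 vertices {T'_1,…,T'_4,T_5,…,T_8,S_1,…,S_6,S_2',…,S_5'} whose edge set is the union of the base edges and the pairs {T,S} with (T;S) ∈ C. Call C admissible if every vertex of Γ_C has even degree. The group G' acts on admissible subsets componentwise (applying σ ∈ G' to both points of each candidate pair). Then the number of G'-orbits of admissible subsets is exactly 30; one orbit is that of the full set of all 24 candidate pairs (corresponding to the monohedral tiling FB𝒪), and the remaining 29 correspond to the dihedral f-tilings whose prototiles are the Möbius triangle and the kite derived from FB𝒪. -/

import Mathlib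

open Matrix

attribute [local instance] Classical.propDecidable

/-- `τ = (2√2+1)/7`. -/
noncomputable def tau : ℝ := (2 * Real.sqrt 2 + 1) / 7

/-- The 18 vertices: `pt 0,…,pt 3` are `T'_1,…,T'_4`; `pt 4,…,pt 7` are `T_5,…,T_8`;
`pt 8,…,pt 13` are `S_1,…,S_6`; `pt 14,…,pt 17` are `S_2',…,S_5'`. -/
noncomputable def pt : Fin 18 → Fin 3 → ℝ :=
  ![tau • ![Real.sqrt 2, 0, 1], tau • ![0, Real.sqrt 2, 1],
    tau • ![-Real.sqrt 2, 0, 1], tau • ![0, -Real.sqrt 2, 1],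
    tau • ![1, 1, -1], tau • ![-1, 1, -1], tau • ![-1, -1, -1], tau • ![1, -1, -1],
    ![0, 0, 1], ![1, 0, 0], ![0, 1, 0], ![-1, 0, 0], ![0, -1, 0], ![0, 0, -1],
    (1 / Real.sqrt 2) • ![1, -1, 0], (1 / Real.sqrt 2) • ![1, 1, 0],
    (1 / Real.sqrt 2) • ![-1, 1, 0], (1 / Real.sqrt 2) • ![-1, -1, 0]]

/-- The base edges: top square, bottom square, the `S`-edges, and the eight fixed
ridge edges. -/
def baseEdges : Finset (Sym2 (Fin 18)) :=
  { s(0, 1), s(1, 2), s(2, 3), s(3, 0),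
    s(4, 5), s(5, 6), s(6, 7), s(7, 4),
    s(8, 14), s(8, 15), s(8, 16), s(8, 17),
    s(13, 9), s(13, 10), s(13, 11), s(13, 12),
    s(9, 14), s(9, 15), s(10, 15), s(10, 16),
    s(11, 16), s(11, 17), s(12, 17), s(12, 14),
    s(0, 9), s(1, 10), s(2, 11), s(3, 12),
    s(4, 15), s(5, 16), s(6, 17), s(7, 14) }

/-- The 24 candidate pairs `(T; S)`. -/
def candPairs : Finset (Fin 18 × Fin 18) :=
  { (0, 8), (0, 14), (0, 15), (1, 8), (1, 15), (1, 16),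
    (2, 8), (2, 16), (2, 17), (3, 8), (3, 17), (3, 14),
    (4, 9), (4, 10), (4, 13), (5, 10), (5, 11), (5, 13),
    (6, 11), (6, 12), (6, 13), (7, 12), (7, 9), (7, 13) }

/-- The simple graph `Γ_C` on the 18 vertices, whose edge set is the union of the
base edges and the pairs `{T, S}` with `(T; S) ∈ C`. -/
noncomputable def Γ (C : Finset (Fin 18 × Fin 18)) : SimpleGraph (Fin 18) :=
  SimpleGraph.fromEdgeSet ↑(baseEdges ∪ C.image fun p => s(p.1, p.2))

/-- A subset `C` of the 24 candidate pairs is admissible if every vertex of `Γ_C`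
has even degree. -/
noncomputable def IsAdmissible (C : Finset (Fin 18 × Fin 18)) : Prop :=
  C ⊆ candPairs ∧ ∀ v : Fin 18, Even ((Γ C).degree v)

/-- The matrix `σ'₂` with rows `(1/√2, 1/√2, 0), (−1/√2, 1/√2, 0), (0, 0, −1)`. -/
noncomputable def sigma2' : Matrix (Fin 3) (Fin 3) ℝ :=
  !![1 / Real.sqrt 2, 1 / Real.sqrt 2, 0;
     -(1 / Real.sqrt 2), 1 / Real.sqrt 2, 0;
     0, 0, -1]

/-- The matrix `σ' = diag(1, −1, 1)`. -/
def sigma' : Matrix (Fin 3) (Fin 3) ℝ := !![1, 0, 0; 0, -1, 0; 0, 0, 1]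

/-- `G'`: the subgroup of `GL(3,ℝ)` generated by `σ'₂` and `σ'`. -/
noncomputable def G' : Subgroup (GL (Fin 3) ℝ) :=
  Subgroup.closure {g | (↑g : Matrix (Fin 3) (Fin 3) ℝ) = sigma2' ∨
    (↑g : Matrix (Fin 3) (Fin 3) ℝ) = sigma'}

/-- `C'` is obtained from `C` by the componentwise action of some `σ ∈ G'`. -/
noncomputable def admRel (C C' : {C : Finset (Fin 18 × Fin 18) // IsAdmissible C}) :
    Prop :=
  ∃ u ∈ G', ∀ p : Fin 18 × Fin 18, p ∈ C'.1 ↔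
    ∃ q ∈ C.1, (↑u : Matrix (Fin 3) (Fin 3) ℝ).mulVec (pt q.1) = pt p.1 ∧
      (↑u : Matrix (Fin 3) (Fin 3) ℝ).mulVec (pt q.2) = pt p.2


/-! ### Combinatorial model: binary necklaces of length 8 -/

/-- The vertex `T` at angular position `45° * k`. -/
def tt : Fin 8 → Fin 18 := ![0, 4, 1, 5, 2, 6, 3, 7]
/-- The equatorial vertex `S` at angular position `45° * k`. -/
def ss : Fin 8 → Fin 18 := ![9, 15, 10, 16, 11, 17, 12, 14]
/-- The pole on the side of `tt k`. -/
def pole : Fin 8 → Fin 18 := ![8, 13, 8, 13, 8, 13, 8, 13]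
def tk : Fin 18 → Fin 8 := ![0, 2, 4, 6, 1, 3, 5, 7, 0, 0, 0, 0, 0, 0, 0, 0, 0, 0]
def sk : Fin 18 → Fin 8 := ![0, 0, 0, 0, 0, 0, 0, 0, 0, 0, 2, 4, 6, 0, 7, 1, 3, 5]

def bit (n : Fin 256) (k : Fin 8) : Bool := n.val.testBit k.val

def ofBits (b : Fin 8 → Bool) : Fin 256 :=
  Fin.ofNat 256 ((b 0).toNat + 2 * ((b 1).toNat + 2 * ((b 2).toNat + 2 * ((b 3).toNat +
    2 * ((b 4).toNat + 2 * ((b 5).toNat + 2 * ((b 6).toNat + 2 * (b 7).toNat)))))))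

lemma bit_ofBits_aux : ∀ b0 b1 b2 b3 b4 b5 b6 b7 : Bool, ∀ k : Fin 8,
    bit (ofBits ![b0, b1, b2, b3, b4, b5, b6, b7]) k = ![b0, b1, b2, b3, b4, b5, b6, b7] k := by
  decide +kernel

lemma bit_ofBits (b : Fin 8 → Bool) : bit (ofBits b) = b := by
  have h : b = ![b 0, b 1, b 2, b 3, b 4, b 5, b 6, b 7] := by
    ext k; fin_cases k <;> rfl
  funext k
  rw [h]
  exact bit_ofBits_aux _ _ _ _ _ _ _ _ k

lemma ofBits_bit : ∀ n : Fin 256, ofBits (bit n) = n := by decide +kernel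

def rotN (n : Fin 256) : Fin 256 := ofBits fun k => bit n (k + 1)
def rotI (n : Fin 256) : Fin 256 := ofBits fun k => bit n (k - 1)
def refN (n : Fin 256) : Fin 256 := ofBits fun k => bit n (-k)

def rotE : Equiv.Perm (Fin 256) where
  toFun := rotN
  invFun := rotI
  left_inv n := by simp [rotN, rotI, bit_ofBits, ofBits_bit]
  right_inv n := by simp [rotN, rotI, bit_ofBits, ofBits_bit]

def refE : Equiv.Perm (Fin 256) where
  toFun := refN
  invFun := refN
  left_inv n := by simp [refN, bit_ofBits, ofBits_bit]
  right_inv n := by simp [refN, bit_ofBits, ofBits_bit]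

def minRot : ℕ → Fin 256 → Fin 256
  | 0, n => n
  | a + 1, n => min n (minRot a (rotN n))

/-- Least element of the dihedral orbit. -/
def canon (n : Fin 256) : Fin 256 := min (minRot 7 n) (minRot 7 (refN n))

lemma canon_rot : ∀ n, canon (rotN n) = canon n := by decide +kernel
lemma canon_ref : ∀ n, canon (refN n) = canon n := by decide +kernel
lemma canon_idem : ∀ n, canon (canon n) = canon n := by decide +kernel
lemma canon_card : (Finset.univ.filter fun n : Fin 256 => canon n = n).card = 30 := by
  decide +kernel

lemma minRot_inv {α : Type*} (q : Fin 256 → α) (hr : ∀ n, q (rotN n) = q n) (a : ℕ) :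
    ∀ n, q (minRot a n) = q n := by
  induction a with
  | zero => intro n; rfl
  | succ a ih =>
    intro n
    rcases min_choice n (minRot a (rotN n)) with h | h
    · simp only [minRot, h]
    · simp only [minRot, h]; rw [ih, hr]

lemma canon_inv {α : Type*} (q : Fin 256 → α) (hr : ∀ n, q (rotN n) = q n)
    (hf : ∀ n, q (refN n) = q n) (n : Fin 256) : q (canon n) = q n := by
  rcases min_choice (minRot 7 n) (minRot 7 (refN n)) with h | h
  · rw [canon, h, minRot_inv q hr]
  · rw [canon, h, minRot_inv q hr, hf]

/-- Value of the configuration with bits `b` on a candidate pair. -/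
def val (b : Fin 8 → Bool) (p : Fin 18 × Fin 18) : Bool :=
  if p.2 = 8 ∨ p.2 = 13 then !(b (tk p.1 - 1) ^^ b (tk p.1 + 1)) else b (sk p.2)

lemma val_left (b : Fin 8 → Bool) (k : Fin 8) : val b (tt k, ss (k - 1)) = b (k - 1) := by
  fin_cases k <;> rfl
lemma val_right (b : Fin 8 → Bool) (k : Fin 8) : val b (tt k, ss (k + 1)) = b (k + 1) := by
  fin_cases k <;> rfl
lemma val_pole (b : Fin 8 → Bool) (k : Fin 8) :
    val b (tt k, pole k) = !(b (k - 1) ^^ b (k + 1)) := by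
  fin_cases k <;> rfl

def Cv (n : Fin 256) : Finset (Fin 18 × Fin 18) := candPairs.filter fun p => val (bit n) p = true

lemma mem_Cv {n : Fin 256} {p : Fin 18 × Fin 18} :
    p ∈ Cv n ↔ p ∈ candPairs ∧ val (bit n) p = true := by simp [Cv]

lemma cand_left : ∀ k, (tt k, ss (k - 1)) ∈ candPairs := by decide
lemma cand_right : ∀ k, (tt k, ss (k + 1)) ∈ candPairs := by decide
lemma cand_pole : ∀ k, (tt k, pole k) ∈ candPairs := by decide
lemma cand_cases : ∀ p ∈ candPairs, ∃ k, p = (tt k, ss (k - 1)) ∨ p = (tt k, ss (k + 1)) ∨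
    p = (tt k, pole k) := by decide +kernel

/-! ### Degrees -/

def xb (C : Finset (Fin 18 × Fin 18)) (p : Fin 18 × Fin 18) : Bool := decide (p ∈ C)

def nbr (v : Fin 18) : Finset (Fin 18) :=
  Finset.univ.filter fun w => (v, w) ∈ candPairs ∨ (w, v) ∈ candPairs
def bdeg (v : Fin 18) : ℕ := (Finset.univ.filter fun w => s(v, w) ∈ baseEdges).card

lemma base_ne : ∀ v w : Fin 18, s(v, w) ∈ baseEdges → v ≠ w := by decide +kernel
lemma cand_ne : ∀ v w : Fin 18, (v, w) ∈ candPairs →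
    s(v, w) ∉ baseEdges ∧ (w, v) ∉ candPairs ∧ v ≠ w := by decide +kernel

lemma Γ_adj (C : Finset (Fin 18 × Fin 18)) (v w : Fin 18) :
    (Γ C).Adj v w ↔ (s(v, w) ∈ baseEdges ∨ (v, w) ∈ C ∨ (w, v) ∈ C) ∧ v ≠ w := by
  rw [Γ, SimpleGraph.fromEdgeSet_adj, Finset.mem_coe, Finset.mem_union, Finset.mem_image]
  refine and_congr_left fun _ => or_congr_right ?_
  constructor
  · rintro ⟨⟨a, b⟩, h, e⟩
    rcases Sym2.eq_iff.1 e with ⟨h1, h2⟩ | ⟨h1, h2⟩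
    · simp only at h1 h2; subst h1 h2; exact Or.inl h
    · simp only at h1 h2; subst h1 h2; exact Or.inr h
  · rintro (h | h)
    · exact ⟨_, h, rfl⟩
    · exact ⟨_, h, Sym2.eq_swap⟩

lemma deg_eq {C : Finset (Fin 18 × Fin 18)} (hC : C ⊆ candPairs) (v : Fin 18) :
    (Γ C).degree v = bdeg v + ∑ w ∈ nbr v, ((xb C (v, w)).toNat + (xb C (w, v)).toNat) := by
  have h1 : (Γ C).degree v = ∑ w, if (Γ C).Adj v w then 1 else 0 := by
    rw [← Finset.card_filter, ← SimpleGraph.card_neighborFinset_eq_degree]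
    congr 1
    ext w; simp
  have h2 : ∑ w ∈ nbr v, ((xb C (v, w)).toNat + (xb C (w, v)).toNat)
      = ∑ w, ((xb C (v, w)).toNat + (xb C (w, v)).toNat) := by
    refine Finset.sum_subset (Finset.subset_univ _) fun w _ hw => ?_
    simp only [nbr, Finset.mem_filter, Finset.mem_univ, true_and, not_or] at hw
    have a : (v, w) ∉ C := fun h => hw.1 (hC h)
    have b : (w, v) ∉ C := fun h => hw.2 (hC h)
    simp [xb, a, b]
  rw [h1, h2, bdeg, Finset.card_filter, ← Finset.sum_add_distrib]
  refine Finset.sum_congr rfl fun w _ => ?_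
  have e := Γ_adj C v w
  by_cases a : (v, w) ∈ C
  · obtain ⟨q1, q2, q3⟩ := cand_ne v w (hC a)
    have b : (w, v) ∉ C := fun h => q2 (hC h)
    simp [e, xb, a, b, q1, q3]
  · by_cases b : (w, v) ∈ C
    · obtain ⟨q1, q2, q3⟩ := cand_ne w v (hC b)
      rw [Sym2.eq_swap] at q1
      simp [e, xb, a, b, q1, q3.symm]
    · by_cases c : s(v, w) ∈ baseEdges
      · simp [e, xb, a, b, c, base_ne v w c]
      · simp [e, xb, a, b, c]

lemma xb_zero {C : Finset (Fin 18 × Fin 18)} (hC : C ⊆ candPairs) {v w : Fin 18}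
    (h : (v, w) ∈ candPairs) : xb C (w, v) = false := by
  have := (cand_ne v w h).2.1
  simp only [xb, decide_eq_false_iff_not]
  exact fun h' => this (hC h')

lemma nbr_tt : ∀ k, nbr (tt k) = {ss (k - 1), ss (k + 1), pole k} := by decide +kernel
lemma nbr_ss : ∀ k, nbr (ss k) = {tt (k - 1), tt (k + 1)} := by decide +kernel
lemma nbr_8 : nbr 8 = {tt 0, tt 2, tt 4, tt 6} := by decide +kernel
lemma nbr_13 : nbr 13 = {tt 1, tt 3, tt 5, tt 7} := by decide +kernel
lemma bdeg_tt : ∀ k, bdeg (tt k) = 3 := by decide +kernel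
lemma bdeg_ss : ∀ k, bdeg (ss k) = 4 := by decide +kernel
lemma bdeg_8 : bdeg 8 = 4 := by decide +kernel
lemma bdeg_13 : bdeg 13 = 4 := by decide +kernel
lemma dis_tt : ∀ k, ss (k - 1) ≠ ss (k + 1) ∧ ss (k - 1) ≠ pole k ∧ ss (k + 1) ≠ pole k := by
  decide
lemma dis_ss : ∀ k, tt (k - 1) ≠ tt (k + 1) := by decide
lemma cand_sl (k : Fin 8) : (tt (k - 1), ss k) ∈ candPairs := by
  simpa using cand_right (k - 1)
lemma cand_sr (k : Fin 8) : (tt (k + 1), ss k) ∈ candPairs := by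
  simpa using cand_left (k + 1)

lemma even_tt {C : Finset (Fin 18 × Fin 18)} (hC : C ⊆ candPairs) (k : Fin 8) :
    Even ((Γ C).degree (tt k)) ↔
      xb C (tt k, pole k) = !(xb C (tt k, ss (k - 1)) ^^ xb C (tt k, ss (k + 1))) := by
  obtain ⟨d1, d2, d3⟩ := dis_tt k
  rw [deg_eq hC, nbr_tt, bdeg_tt, Finset.sum_insert (by simp [d1, d2]),
    Finset.sum_insert (by simp [d3]), Finset.sum_singleton, xb_zero hC (cand_left k),
    xb_zero hC (cand_right k), xb_zero hC (cand_pole k)]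
  generalize xb C (tt k, ss (k - 1)) = a
  generalize xb C (tt k, ss (k + 1)) = b
  generalize xb C (tt k, pole k) = c
  revert a b c
  decide

lemma even_ss {C : Finset (Fin 18 × Fin 18)} (hC : C ⊆ candPairs) (k : Fin 8) :
    Even ((Γ C).degree (ss k)) ↔ xb C (tt (k - 1), ss k) = xb C (tt (k + 1), ss k) := by
  rw [deg_eq hC, nbr_ss, bdeg_ss, Finset.sum_insert (by simp [dis_ss k]),
    Finset.sum_singleton, xb_zero hC (cand_sl k), xb_zero hC (cand_sr k)]
  generalize xb C (tt (k - 1), ss k) = a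
  generalize xb C (tt (k + 1), ss k) = b
  revert a b
  decide

lemma even_8 {C : Finset (Fin 18 × Fin 18)} (hC : C ⊆ candPairs) :
    Even ((Γ C).degree 8) ↔
      (xb C (tt 0, 8) ^^ xb C (tt 2, 8) ^^ xb C (tt 4, 8) ^^ xb C (tt 6, 8)) = false := by
  rw [deg_eq hC, nbr_8, bdeg_8, Finset.sum_insert (by decide), Finset.sum_insert (by decide),
    Finset.sum_insert (by decide), Finset.sum_singleton, xb_zero hC (show (tt 0, 8) ∈ candPairs from cand_pole 0),
    xb_zero hC (show (tt 2, 8) ∈ candPairs from cand_pole 2), xb_zero hC (show (tt 4, 8) ∈ candPairs from cand_pole 4), xb_zero hC (show (tt 6, 8) ∈ candPairs from cand_pole 6)]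
  generalize xb C (tt 0, 8) = a
  generalize xb C (tt 2, 8) = b
  generalize xb C (tt 4, 8) = c
  generalize xb C (tt 6, 8) = d
  revert a b c d
  decide

lemma even_13 {C : Finset (Fin 18 × Fin 18)} (hC : C ⊆ candPairs) :
    Even ((Γ C).degree 13) ↔
      (xb C (tt 1, 13) ^^ xb C (tt 3, 13) ^^ xb C (tt 5, 13) ^^ xb C (tt 7, 13)) = false := by
  rw [deg_eq hC, nbr_13, bdeg_13, Finset.sum_insert (by decide), Finset.sum_insert (by decide),
    Finset.sum_insert (by decide), Finset.sum_singleton, xb_zero hC (show (tt 1, 13) ∈ candPairs from cand_pole 1),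
    xb_zero hC (show (tt 3, 13) ∈ candPairs from cand_pole 3), xb_zero hC (show (tt 5, 13) ∈ candPairs from cand_pole 5), xb_zero hC (show (tt 7, 13) ∈ candPairs from cand_pole 7)]
  generalize xb C (tt 1, 13) = a
  generalize xb C (tt 3, 13) = b
  generalize xb C (tt 5, 13) = c
  generalize xb C (tt 7, 13) = d
  revert a b c d
  decide

lemma vertex_cases : ∀ v : Fin 18, v = 8 ∨ v = 13 ∨ ∃ k, v = tt k ∨ v = ss k := by decide

lemma xb_Cv {n : Fin 256} {p : Fin 18 × Fin 18} (hp : p ∈ candPairs) :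
    xb (Cv n) p = val (bit n) p := by
  simp [xb, mem_Cv, hp]

lemma Cv_adm (n : Fin 256) : IsAdmissible (Cv n) := by
  have hC : Cv n ⊆ candPairs := Finset.filter_subset _ _
  refine ⟨hC, fun v => ?_⟩
  rcases vertex_cases v with rfl | rfl | ⟨k, rfl | rfl⟩
  · rw [even_8 hC, xb_Cv (show (tt 0, 8) ∈ candPairs from cand_pole 0), xb_Cv (show (tt 2, 8) ∈ candPairs from cand_pole 2), xb_Cv (show (tt 4, 8) ∈ candPairs from cand_pole 4),
      xb_Cv (show (tt 6, 8) ∈ candPairs from cand_pole 6)]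
    generalize bit n = b
    change (!(b 7 ^^ b 1) ^^ !(b 1 ^^ b 3) ^^ !(b 3 ^^ b 5) ^^ !(b 5 ^^ b 7)) = false
    generalize b 1 = b1
    generalize b 3 = b3
    generalize b 5 = b5
    generalize b 7 = b7
    revert b1 b3 b5 b7
    decide
  · rw [even_13 hC, xb_Cv (show (tt 1, 13) ∈ candPairs from cand_pole 1), xb_Cv (show (tt 3, 13) ∈ candPairs from cand_pole 3), xb_Cv (show (tt 5, 13) ∈ candPairs from cand_pole 5),
      xb_Cv (show (tt 7, 13) ∈ candPairs from cand_pole 7)]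
    generalize bit n = b
    change (!(b 0 ^^ b 2) ^^ !(b 2 ^^ b 4) ^^ !(b 4 ^^ b 6) ^^ !(b 6 ^^ b 0)) = false
    generalize b 0 = b1
    generalize b 2 = b3
    generalize b 4 = b5
    generalize b 6 = b7
    revert b1 b3 b5 b7
    decide
  · rw [even_tt hC, xb_Cv (cand_left k), xb_Cv (cand_right k), xb_Cv (cand_pole k), val_left,
      val_right, val_pole]
  · rw [even_ss hC, xb_Cv (cand_sl k), xb_Cv (cand_sr k)]
    have h1 := val_right (bit n) (k - 1)
    have h2 := val_left (bit n) (k + 1)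
    rw [sub_add_cancel] at h1
    rw [add_sub_cancel_right] at h2
    rw [h1, h2]

def idx (C : Finset (Fin 18 × Fin 18)) : Fin 256 := ofBits fun k => xb C (tt (k + 1), ss k)

lemma idx_Cv (n : Fin 256) : idx (Cv n) = n := by
  have : (fun k => xb (Cv n) (tt (k + 1), ss k)) = bit n := by
    funext k
    have h2 := val_left (bit n) (k + 1)
    rw [add_sub_cancel_right] at h2
    rw [xb_Cv (cand_sr k), h2]
  rw [idx, this, ofBits_bit]

lemma Cv_idx {C : Finset (Fin 18 × Fin 18)} (h : IsAdmissible C) : Cv (idx C) = C := by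
  obtain ⟨hC, he⟩ := h
  have key : ∀ p ∈ candPairs, val (bit (idx C)) p = xb C p := by
    intro p hp
    have hl : ∀ k : Fin 8, xb C (tt (k - 1 + 1), ss (k - 1)) = xb C (tt k, ss (k - 1)) := by
      intro k; rw [sub_add_cancel]
    have hr : ∀ k : Fin 8, xb C (tt (k + 1 + 1), ss (k + 1)) = xb C (tt k, ss (k + 1)) := by
      intro k
      have := (even_ss hC (k + 1)).1 (he _)
      rw [add_sub_cancel_right] at this
      exact this.symm
    obtain ⟨k, rfl | rfl | rfl⟩ := cand_cases p hp
    · rw [val_left, idx, bit_ofBits]; exact hl k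
    · rw [val_right, idx, bit_ofBits]; exact hr k
    · rw [val_pole, idx, bit_ofBits, (even_tt hC k).1 (he _), ← hl k, ← hr k]
  ext p
  rw [mem_Cv]
  constructor
  · rintro ⟨h1, h2⟩
    rw [key p h1] at h2
    simpa [xb] using h2
  · intro h
    refine ⟨hC h, ?_⟩
    rw [key p (hC h)]
    simpa [xb] using h

/-! ### The group action -/

def rotV : Fin 18 → Fin 18 := ![7, 4, 5, 6, 0, 1, 2, 3, 13, 14, 15, 16, 17, 8, 12, 9, 10, 11]
def refV : Fin 18 → Fin 18 := ![0, 3, 2, 1, 7, 6, 5, 4, 8, 9, 12, 11, 10, 13, 15, 14, 17, 16]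
def rotVI : Fin 18 → Fin 18 := ![4, 5, 6, 7, 1, 2, 3, 0, 13, 15, 16, 17, 14, 8, 9, 10, 11, 12]

def rotP : Equiv.Perm (Fin 18) := ⟨rotV, rotVI, by decide, by decide⟩
def refP : Equiv.Perm (Fin 18) := ⟨refV, refV, by decide, by decide⟩

lemma cand_rot : ∀ p : Fin 18 × Fin 18, (rotV p.1, rotV p.2) ∈ candPairs ↔ p ∈ candPairs := by
  decide +kernel
lemma cand_ref : ∀ p : Fin 18 × Fin 18, (refV p.1, refV p.2) ∈ candPairs ↔ p ∈ candPairs := by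
  decide +kernel

lemma mem_rot (n : Fin 256) (p : Fin 18 × Fin 18) :
    (rotP p.1, rotP p.2) ∈ Cv (rotE n) ↔ p ∈ Cv n := by
  change (rotV p.1, rotV p.2) ∈ Cv (rotN n) ↔ p ∈ Cv n
  rw [mem_Cv, mem_Cv, cand_rot]
  refine and_congr_right fun hp => ?_
  rw [rotN, bit_ofBits]
  generalize bit n = b
  obtain ⟨k, rfl | rfl | rfl⟩ := cand_cases p hp <;> fin_cases k <;> exact Iff.rfl

lemma mem_ref (n : Fin 256) (p : Fin 18 × Fin 18) :
    (refP p.1, refP p.2) ∈ Cv (refE n) ↔ p ∈ Cv n := by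
  change (refV p.1, refV p.2) ∈ Cv (refN n) ↔ p ∈ Cv n
  rw [mem_Cv, mem_Cv, cand_ref]
  refine and_congr_right fun hp => ?_
  rw [refN, bit_ofBits]
  generalize bit n = b
  obtain ⟨k, rfl | rfl | rfl⟩ := cand_cases p hp
  · fin_cases k <;> exact Iff.rfl
  · fin_cases k <;> exact Iff.rfl
  · rw [val_pole, Bool.xor_comm]
    fin_cases k <;> exact Iff.rfl

lemma tau_pos : 0 < tau := by unfold tau; positivity

def sgnTable : Fin 18 → Fin 3 → SignType :=
  ![![1, 0, 1], ![0, 1, 1], ![-1, 0, 1], ![0, -1, 1],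
    ![1, 1, -1], ![-1, 1, -1], ![-1, -1, -1], ![1, -1, -1],
    ![0, 0, 1], ![1, 0, 0], ![0, 1, 0], ![-1, 0, 0], ![0, -1, 0], ![0, 0, -1],
    ![1, -1, 0], ![1, 1, 0], ![-1, 1, 0], ![-1, -1, 0]]

lemma sgn_pt (i : Fin 18) (j : Fin 3) : SignType.sign (pt i j) = sgnTable i j := by
  have ht := tau_pos
  have h2 : 0 < Real.sqrt 2 := by positivity
  fin_cases i <;> fin_cases j <;> simp [pt, sgnTable, ht, h2]

lemma sgn_inj : ∀ i i', (∀ j, sgnTable i j = sgnTable i' j) → i = i' := by decide +kernel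

lemma pt_inj {i i' : Fin 18} (h : pt i = pt i') : i = i' :=
  sgn_inj i i' fun j => by rw [← sgn_pt, ← sgn_pt, h]

lemma sigma2_pt (i : Fin 18) : sigma2' *ᵥ pt i = pt (rotP i) := by
  change _ = pt (rotV i)
  have h2 : Real.sqrt 2 * Real.sqrt 2 = 2 := Real.mul_self_sqrt (by norm_num)
  have h0 : Real.sqrt 2 ≠ 0 := by positivity
  have h3 : (Real.sqrt 2)⁻¹ = Real.sqrt 2 / 2 := by field_simp; linarith
  fin_cases i <;> ext j <;> fin_cases j <;>
    simp [pt, sigma2', rotV, Matrix.mulVec, dotProduct, Fin.sum_univ_three, h3] <;>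
    grind

lemma sigma_pt (i : Fin 18) : sigma' *ᵥ pt i = pt (refP i) := by
  change _ = pt (refV i)
  fin_cases i <;> ext j <;> fin_cases j <;>
    simp [pt, sigma', refV, Matrix.mulVec, dotProduct, Fin.sum_univ_three]

lemma G'_act (u : GL (Fin 3) ℝ) (hu : u ∈ G') :
    ∃ (π : Equiv.Perm (Fin 18)) (e : Equiv.Perm (Fin 256)),
      (∀ i, (u : Matrix (Fin 3) (Fin 3) ℝ) *ᵥ pt i = pt (π i)) ∧ (∀ n, canon (e n) = canon n) ∧
      ∀ n (p : Fin 18 × Fin 18), (π p.1, π p.2) ∈ Cv (e n) ↔ p ∈ Cv n := by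
  induction hu using Subgroup.closure_induction with
  | mem g hg =>
    rcases hg with hg | hg
    · exact ⟨rotP, rotE, fun i => by rw [hg, sigma2_pt], canon_rot, mem_rot⟩
    · exact ⟨refP, refE, fun i => by rw [hg, sigma_pt], canon_ref, mem_ref⟩
  | one => exact ⟨1, 1, by simp, by simp, by simp⟩
  | mul g h _ _ ig ih =>
    obtain ⟨π, e, h1, h2, h3⟩ := ig
    obtain ⟨π', e', h1', h2', h3'⟩ := ih
    refine ⟨π * π', e * e', fun i => ?_, fun n => ?_, fun n p => ?_⟩
    · rw [Units.val_mul, ← Matrix.mulVec_mulVec, h1', h1]; rfl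
    · exact (h2 _).trans (h2' _)
    · exact (h3 (e' n) (π' p.1, π' p.2)).trans (h3' n p)
  | inv g _ ig =>
    obtain ⟨π, e, h1, h2, h3⟩ := ig
    refine ⟨π⁻¹, e⁻¹, fun i => ?_, fun n => ?_, fun n p => ?_⟩
    · have := h1 (π⁻¹ i)
      rw [show π (π⁻¹ i) = i from π.apply_symm_apply i] at this
      rw [← this, Matrix.mulVec_mulVec, ← Units.val_mul, inv_mul_cancel, Units.val_one,
        Matrix.one_mulVec]
    · have := h2 (e⁻¹ n)
      rwa [show e (e⁻¹ n) = n from e.apply_symm_apply n, eq_comm] at this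
    · have := h3 (e⁻¹ n) (π⁻¹ p.1, π⁻¹ p.2)
      simpa using this.symm

lemma admRel_canon {C C' : {C : Finset (Fin 18 × Fin 18) // IsAdmissible C}} (h : admRel C C') :
    canon (idx C.1) = canon (idx C'.1) := by
  obtain ⟨u, hu, h⟩ := h
  obtain ⟨π, e, h1, h2, h3⟩ := G'_act u hu
  have : C'.1 = Cv (e (idx C.1)) := by
    ext p
    rw [h p]
    have h3' := h3 (idx C.1)
    rw [Cv_idx C.2] at h3'
    constructor
    · rintro ⟨q, hq, a, b⟩
      rw [h1] at a b
      have := (h3' q).2 hq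
      rwa [pt_inj a, pt_inj b] at this
    · intro hp
      refine ⟨(π⁻¹ p.1, π⁻¹ p.2), (h3' _).1 (by simpa using hp), ?_, ?_⟩ <;> rw [h1] <;> simp
  rw [this, idx_Cv, h2]

lemma admRel_of (u : GL (Fin 3) ℝ) (hu : u ∈ G') (π : Equiv.Perm (Fin 18)) (n m : Fin 256)
    (h1 : ∀ i, (u : Matrix (Fin 3) (Fin 3) ℝ) *ᵥ pt i = pt (π i))
    (h3 : ∀ p : Fin 18 × Fin 18, (π p.1, π p.2) ∈ Cv m ↔ p ∈ Cv n) :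
    admRel ⟨Cv n, Cv_adm n⟩ ⟨Cv m, Cv_adm m⟩ := by
  refine ⟨u, hu, fun p => ?_⟩
  constructor
  · intro hp
    refine ⟨(π⁻¹ p.1, π⁻¹ p.2), (h3 _).1 (by simpa using hp), ?_, ?_⟩ <;> rw [h1] <;> simp
  · rintro ⟨q, hq, a, b⟩
    rw [h1] at a b
    have := (h3 q).2 hq
    rwa [pt_inj a, pt_inj b] at this

lemma det_sigma2 : sigma2'.det ≠ 0 := by
  have h0 : Real.sqrt 2 ≠ 0 := by positivity
  have h2 : Real.sqrt 2 * Real.sqrt 2 = 2 := Real.mul_self_sqrt (by norm_num)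
  have : sigma2'.det = -1 := by
    simp [sigma2', Matrix.det_fin_three]
    field_simp
    nlinarith
  rw [this]; norm_num

lemma det_sigma : sigma'.det ≠ 0 := by
  simp [sigma', Matrix.det_fin_three]

noncomputable def qq (n : Fin 256) : Quot admRel := Quot.mk _ ⟨Cv n, Cv_adm n⟩

lemma qq_rot (n : Fin 256) : qq (rotN n) = qq n := by
  refine (Quot.sound ?_).symm
  exact admRel_of (Matrix.GeneralLinearGroup.mkOfDetNeZero sigma2' det_sigma2)
    (Subgroup.subset_closure (Or.inl rfl)) rotP n (rotN n) sigma2_pt (mem_rot n)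

lemma qq_ref (n : Fin 256) : qq (refN n) = qq n := by
  refine (Quot.sound ?_).symm
  exact admRel_of (Matrix.GeneralLinearGroup.mkOfDetNeZero sigma' det_sigma)
    (Subgroup.subset_closure (Or.inr rfl)) refP n (refN n) sigma_pt (mem_ref n)

lemma qq_canon (n : Fin 256) : qq (canon n) = qq n := canon_inv qq qq_rot qq_ref n

lemma card_quot : Nat.card (Quot admRel) = 30 := by
  let F : {n : Fin 256 // canon n = n} → Quot admRel := fun n => qq n.1
  have hF : Function.Bijective F := by
    constructor
    · intro n m h
      have := congrArg (Quot.lift (fun C : {C // IsAdmissible C} => canon (idx C.1))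
        fun _ _ h => admRel_canon h) h
      change canon (idx (Cv n.1)) = canon (idx (Cv m.1)) at this
      rw [idx_Cv, idx_Cv, n.2, m.2] at this
      exact Subtype.ext this
    · intro x
      induction x using Quot.ind with
      | mk C =>
        refine ⟨⟨canon (idx C.1), canon_idem _⟩, ?_⟩
        change qq (canon (idx C.1)) = _
        rw [qq_canon]
        exact congrArg (Quot.mk _) (Subtype.ext (Cv_idx C.2))
  rw [← Nat.card_congr (Equiv.ofBijective F hF), Nat.card_eq_fintype_card, Fintype.card_subtype]
  exact canon_card

lemma Cv_full : Cv 255 = candPairs := by decide +kernel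

/-- There are exactly `30` `G'`-orbits of admissible subsets of the 24 candidate
pairs; the full set of candidate pairs is admissible (its orbit corresponds to the
monohedral tiling `FB𝒪`), and the remaining `29` orbits correspond to the dihedral
f-tilings with prototiles the Möbius triangle and the kite derived from `FB𝒪`. -/
theorem stmt_13 : Nat.card (Quot admRel) = 30 ∧ IsAdmissible candPairs := by
  exact ⟨card_quot, Cv_full ▸ Cv_adm 255⟩
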